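/- arXiv:2007.14209 — 4 statements merged into one kernel-verified Lean document; each statement's English description precedes it below -/
import Mathlib

section
/- Let f : ℝ^d → ℝ be differentiable with L-Lipschitz gradient, let x, x̃ ∈ ℝ^d, let r be a random index uniformly distributed on {1,…,d}, and define the SVRG flux F := ∇f(x̃) + d(∂_r f(x) − ∂_r f(x̃)) e^r. Then E_r‖∇f(x) − F‖² = (d−1)‖∇f(x) − ∇f(x̃)‖² ≤ d L² ‖x − x̃‖². -/
open scoped BigOperators

/-! Put `g = ∇f(x) - ∇f(xref)`. The error for the index `r` is `g - d g_r e^r`, and expanding the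
square gives `‖g - d g_r e^r‖² = ‖g‖² + (d² - 2d) g_r²`. Averaging over `r` and using
`∑ g_r² = ‖g‖²` yields `(d - 1) ‖g‖²`; the bound is then the Lipschitz estimate on `‖g‖`. -/

/-- Mean squared error of the unbiased one-coordinate estimator `d g_r e^r` of a vector `g`,
for `r` uniform. -/
lemma mean_sq_coordinate_error (d : ℕ) (hd : 0 < d) (g : EuclideanSpace ℝ (Fin d)) :
    (d : ℝ)⁻¹ * ∑ r : Fin d, ‖g - EuclideanSpace.single r ((d : ℝ) * g r)‖ ^ 2
      = ((d : ℝ) - 1) * ‖g‖ ^ 2 := by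
  have hd0 : (d : ℝ) ≠ 0 := by positivity
  have expand : ∀ r : Fin d, ‖g - EuclideanSpace.single r ((d : ℝ) * g r)‖ ^ 2
      = ‖g‖ ^ 2 + ((d : ℝ) ^ 2 - 2 * d) * g r ^ 2 := by
    intro r
    rw [norm_sub_sq_real, EuclideanSpace.inner_single_right, EuclideanSpace.norm_single,
      Real.norm_eq_abs, sq_abs]
    simp only [conj_trivial]
    ring
  have hsum : ∑ r : Fin d, g r ^ 2 = ‖g‖ ^ 2 := (EuclideanSpace.real_norm_sq_eq g).symm
  simp only [expand, Finset.sum_add_distrib, ← Finset.mul_sum, hsum, Finset.sum_const,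
    Finset.card_univ, Fintype.card_fin, nsmul_eq_mul]
  field_simp
  ring

/-- Variance identity and bound for the SVRG gradient surrogate
`F = ∇f(xref) + d (∂_r f(x) − ∂_r f(xref)) e^r` with `r` uniform on `{1,…,d}`,
where `xref` is the reference point of the current SVRG epoch. -/
theorem svrg_surrogate_variance (d : ℕ) (hd : 0 < d) (L : ℝ)
    (f : EuclideanSpace ℝ (Fin d) → ℝ) (hf : Differentiable ℝ f)
    (hlip : ∀ x x' : EuclideanSpace ℝ (Fin d),
      ‖gradient f x - gradient f x'‖ ≤ L * ‖x - x'‖)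
    (x xref : EuclideanSpace ℝ (Fin d)) :
    (d : ℝ)⁻¹ * ∑ r : Fin d,
        ‖gradient f x - (gradient f xref +
          EuclideanSpace.single r ((d : ℝ) * (gradient f x r - gradient f xref r)))‖ ^ 2
      = ((d : ℝ) - 1) * ‖gradient f x - gradient f xref‖ ^ 2 ∧
    ((d : ℝ) - 1) * ‖gradient f x - gradient f xref‖ ^ 2
      ≤ d * L ^ 2 * ‖x - xref‖ ^ 2 := by
  refine ⟨?_, ?_⟩
  · simpa only [sub_sub, PiLp.sub_apply] using
      mean_sq_coordinate_error d hd (gradient f x - gradient f xref)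
  · calc ((d : ℝ) - 1) * ‖gradient f x - gradient f xref‖ ^ 2
        ≤ d * ‖gradient f x - gradient f xref‖ ^ 2 := by
          gcongr
          linarith
      _ ≤ d * (L * ‖x - xref‖) ^ 2 := by
          gcongr
          exact hlip x xref
      _ = d * L ^ 2 * ‖x - xref‖ ^ 2 := by ring
end

section
/- Let f : ℝ^d → ℝ be differentiable with L-Lipschitz gradient, let x, y, g, β ∈ ℝ^d, let r be a random index uniformly distributed on {1,…,d}, and define the SAGA-type flux F := g + d(∂_r f(x) − g_r) e^r. Then E_r‖∇f(x) − F‖² = (d−1)‖∇f(x) − g‖² ≤ 3 d L² ‖x − y‖² + 3 d ‖∇f(y) − β‖² + 3 d ‖β − g‖². -/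
open scoped BigOperators

/-! Put `v = ∇f(x) - g`. The error of the surrogate is `v - d v_r e^r`, whose squared norm is
`‖v‖² + (d² - 2d) v_r²`; averaging over `r` gives `(d - 1) ‖v‖²`. The bound follows by splitting
`v = (∇f(x) - ∇f(y)) + (∇f(y) - β) + (β - g)`, the inequality `‖a + b + c‖² ≤ 3 (‖a‖² + ‖b‖² + ‖c‖²)`
and the Lipschitz property of the gradient. -/

lemma norm_sub_single_sq {d : ℕ} (v : EuclideanSpace ℝ (Fin d)) (r : Fin d) (c : ℝ) :
    ‖v - EuclideanSpace.single r (c * v r)‖ ^ 2 = ‖v‖ ^ 2 + (c ^ 2 - 2 * c) * v r ^ 2 := by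
  rw [norm_sub_sq_real, EuclideanSpace.inner_single_right, EuclideanSpace.norm_single,
    Real.norm_eq_abs, sq_abs]
  simp only [conj_trivial]
  ring

lemma norm_add_three_sq_le {E : Type*} [SeminormedAddCommGroup E] (a b c : E) :
    ‖a + b + c‖ ^ 2 ≤ 3 * (‖a‖ ^ 2 + ‖b‖ ^ 2 + ‖c‖ ^ 2) := by
  have h : ‖a + b + c‖ ^ 2 ≤ (‖a‖ + ‖b‖ + ‖c‖) ^ 2 :=
    pow_le_pow_left₀ (norm_nonneg _) (norm_add₃_le) 2
  nlinarith [sq_nonneg (‖a‖ - ‖b‖), sq_nonneg (‖b‖ - ‖c‖), sq_nonneg (‖a‖ - ‖c‖)]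

/-- Variance identity and decomposition for the SAGA-type (RCAD) gradient
surrogate `F = g + d (∂_r f(x) − g_r) e^r` with `r` uniform on `{1,…,d}`,
`g` the stored gradient table and `β` the table of a coupled trajectory `y`. -/
theorem rcad_surrogate_variance (d : ℕ) (hd : 0 < d) (L : ℝ)
    (f : EuclideanSpace ℝ (Fin d) → ℝ) (hf : Differentiable ℝ f)
    (hlip : ∀ x x' : EuclideanSpace ℝ (Fin d),
      ‖gradient f x - gradient f x'‖ ≤ L * ‖x - x'‖)
    (x y g β : EuclideanSpace ℝ (Fin d)) :
    (d : ℝ)⁻¹ * ∑ r : Fin d,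
        ‖gradient f x - (g +
          EuclideanSpace.single r ((d : ℝ) * (gradient f x r - g r)))‖ ^ 2
      = ((d : ℝ) - 1) * ‖gradient f x - g‖ ^ 2 ∧
    ((d : ℝ) - 1) * ‖gradient f x - g‖ ^ 2
      ≤ 3 * d * L ^ 2 * ‖x - y‖ ^ 2 + 3 * d * ‖gradient f y - β‖ ^ 2
        + 3 * d * ‖β - g‖ ^ 2 := by
  have hd0 : (d : ℝ) ≠ 0 := by exact_mod_cast hd.ne'
  constructor
  · have key (r : Fin d) : ‖gradient f x - (g +
        EuclideanSpace.single r ((d : ℝ) * (gradient f x r - g r)))‖ ^ 2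
        = ‖gradient f x - g‖ ^ 2
          + ((d : ℝ) ^ 2 - 2 * d) * (gradient f x - g) r ^ 2 := by
      rw [← norm_sub_single_sq, sub_add_eq_sub_sub, PiLp.sub_apply]
    simp_rw [key]
    rw [Finset.sum_add_distrib, ← Finset.mul_sum, ← EuclideanSpace.real_norm_sq_eq]
    simp only [Finset.sum_const, Finset.card_univ, Fintype.card_fin, nsmul_eq_mul]
    field_simp
    ring
  · have hsplit := norm_add_three_sq_le (gradient f x - gradient f y) (gradient f y - β) (β - g)
    rw [sub_add_sub_cancel, sub_add_sub_cancel] at hsplit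
    have hL : ‖gradient f x - gradient f y‖ ^ 2 ≤ L ^ 2 * ‖x - y‖ ^ 2 := by
      rw [← mul_pow]
      exact pow_le_pow_left₀ (norm_nonneg _) (hlip x y) 2
    calc ((d : ℝ) - 1) * ‖gradient f x - g‖ ^ 2
        ≤ d * ‖gradient f x - g‖ ^ 2 := by gcongr; linarith
      _ ≤ d * (3 * (L ^ 2 * ‖x - y‖ ^ 2 + ‖gradient f y - β‖ ^ 2 + ‖β - g‖ ^ 2)) := by
        gcongr
        linarith
      _ = _ := by ring
end

section
/- Let 0 < μ ≤ L, set κ = L/μ and γ = 1/L, and let 0 < h < 1/1648. Let H be a symmetric d×d real matrix with μ I_d ⪯ H ⪯ L I_d. For a, b ∈ ℝ^d define A := ((1 − h − e^{−2h}) I_d − ((1 − e^{−2h})/2) γ H) a + (h + e^{−2h}) b and C := (1 − h) a + h b. Then ‖A‖² + ‖C‖² ≤ (1 − h/κ + 200 h²)(‖a‖² + ‖b‖²). -/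
/-!
Put `G = γ H`, so `m I ⪯ G ⪯ I` with `m = 1/κ`, and `e^{-2h} = 1 - 2h + δ` with `0 ≤ δ ≤ 4h²`.
To first order in `h`,
`‖A‖² + ‖C‖² ≈ (1 - 2h)(‖a‖² + ‖b‖²) + 2h ⟨(2 - G) a, b⟩`.
Since `2 - G ⪰ 0`, evaluating its quadratic form at `a - b` gives
`2⟨(2 - G) a, b⟩ ≤ ⟨(2 - G) a, a⟩ + ⟨(2 - G) b, b⟩ ≤ (2 - m)(‖a‖² + ‖b‖²)`,
which is the rate `1 - h m`. The remainder is `O(h²)(‖a‖² + ‖b‖²)` because all the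
quantities `⟨a, b⟩`, `⟨G a, b⟩`, `‖G a‖²` are controlled by `‖a‖² + ‖b‖²`; for the last one,
`G² ⪯ G` is used. `scalar_estimate` carries the computation in terms of these inner products.
-/

open scoped BigOperators
open Matrix

/-- The estimate in terms of `x = ‖a‖²`, `y = ‖b‖²`, `z = ⟨a, b⟩`, `s = ⟨a, G a⟩`, `t = ⟨b, G a⟩`,
`u = ⟨b, G b⟩`, `w = ‖G a‖²`, with `e` in the role of `e^{-2h}`. -/
lemma scalar_estimate (h e m x y z s t u w : ℝ) (hh0 : 0 < h) (hh : h < 1 / 1648)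
    (he1 : 1 - 2 * h ≤ e) (he2 : e ≤ 1 - 2 * h + 4 * h ^ 2)
    (hx : 0 ≤ x) (hy : 0 ≤ y) (hz1 : 2 * z ≤ x + y) (hz2 : -(x + y) ≤ 2 * z)
    (hs : m * x ≤ s) (hs0 : 0 ≤ s) (hs1 : s ≤ x) (hu : m * y ≤ u) (hu1 : u ≤ y)
    (hws : w ≤ s) (ht : 2 * t ≤ s + u)
    (hst : s + u - 2 * t ≤ x + y - 2 * z) :
    (1 - h - e) ^ 2 * x + ((1 - e) / 2) ^ 2 * w + (h + e) ^ 2 * y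
      - 2 * (1 - h - e) * ((1 - e) / 2) * s + 2 * (1 - h - e) * (h + e) * z
      - 2 * ((1 - e) / 2) * (h + e) * t
      + ((1 - h) ^ 2 * x + h ^ 2 * y + 2 * h * (1 - h) * z)
      ≤ (1 - h * m + 200 * h ^ 2) * (x + y) := by
  obtain ⟨δ, rfl⟩ : ∃ δ, e = 1 - 2 * h + δ := ⟨e - (1 - 2 * h), by ring⟩
  have hδ0 : 0 ≤ δ := by linarith
  have hδ1 : δ ≤ 4 * h ^ 2 := by linarith
  have hδh : δ ≤ h := by nlinarith
  have hhδ0 : 0 ≤ h * δ := by positivity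
  have hhδ : h * δ ≤ h ^ 2 := by nlinarith
  have hδδ : δ ^ 2 ≤ h ^ 2 := by nlinarith
  have hδδ0 : 0 ≤ δ ^ 2 := by positivity
  have hh2 : 0 ≤ h ^ 2 := by positivity
  have hxy : 0 ≤ x + y := by linarith
  have main : 4 * h * z - 2 * h * t ≤ 2 * h * (x + y) - h * m * (x + y) := by
    have : 0 ≤ h * (2 * (x + y) - m * (x + y) - (4 * z - 2 * t)) := by
      apply mul_nonneg hh0.le; linarith
    linarith
  have cx : ((h - δ) ^ 2 + (1 - h) ^ 2) * x ≤ (1 - 2 * h + 10 * h ^ 2) * x := by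
    apply mul_le_mul_of_nonneg_right _ hx; linarith
  have cy : ((1 - h + δ) ^ 2 + h ^ 2) * y ≤ (1 - 2 * h + 20 * h ^ 2) * y := by
    apply mul_le_mul_of_nonneg_right _ hy; linarith
  have cw : (h - δ / 2) ^ 2 * w ≤ h ^ 2 * (x + y) := by
    have h1 : (h - δ / 2) ^ 2 * w ≤ (h - δ / 2) ^ 2 * (x + y) := by
      apply mul_le_mul_of_nonneg_left _ (sq_nonneg _); linarith
    have h2 : (h - δ / 2) ^ 2 * (x + y) ≤ h ^ 2 * (x + y) := by
      apply mul_le_mul_of_nonneg_right _ hxy; nlinarith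
    linarith
  have cs : 0 ≤ (h - δ) * (h - δ / 2) * s := by
    apply mul_nonneg (mul_nonneg _ _) hs0 <;> linarith
  have cz : (-4 * h ^ 2 + 4 * h * δ - 2 * δ - 2 * δ ^ 2) * z ≤ 20 * h ^ 2 * (x + y) := by
    have h1 : 0 ≤ 4 * h ^ 2 - 4 * h * δ + 2 * δ + 2 * δ ^ 2 := by linarith
    have h2 : 4 * h ^ 2 - 4 * h * δ + 2 * δ + 2 * δ ^ 2 ≤ 20 * h ^ 2 := by linarith
    have h3 := mul_nonneg h1 (by linarith : 0 ≤ 2 * z + (x + y))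
    have h4 := mul_le_mul_of_nonneg_right h2 hxy
    nlinarith [mul_nonneg hh2 hxy]
  have ct : (2 * h ^ 2 + δ - 3 * h * δ + δ ^ 2) * t ≤ 20 * h ^ 2 * (x + y) := by
    have h1 : 0 ≤ 2 * h ^ 2 + δ - 3 * h * δ + δ ^ 2 := by
      have : h * δ ≤ 1 / 1648 * δ := by gcongr
      linarith
    have h2 : 2 * h ^ 2 + δ - 3 * h * δ + δ ^ 2 ≤ 20 * h ^ 2 := by linarith
    have h3 := mul_nonneg h1 (by linarith : 0 ≤ (x + y) - 2 * t)
    have h4 := mul_le_mul_of_nonneg_right h2 hxy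
    nlinarith [mul_nonneg hh2 hxy]
  have e1 := mul_nonneg hh2 hx
  have e2 := mul_nonneg hh2 hy
  linarith

lemma exp_neg_two_mul_le (h : ℝ) (hh0 : 0 < h) :
    Real.exp (-2 * h) ≤ 1 - 2 * h + 4 * h ^ 2 := by
  have h1 : 2 * h + 1 ≤ Real.exp (2 * h) := Real.add_one_le_exp _
  have h2 : Real.exp (-2 * h) * Real.exp (2 * h) = 1 := by
    rw [← Real.exp_add]; simp
  have h3 : Real.exp (-2 * h) * (2 * h + 1) ≤ 1 := by
    exact (mul_le_mul_of_nonneg_left h1 (Real.exp_pos _).le).trans h2.le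
  -- `(1 + 2h)(1 - 2h + 4h²) = 1 + 8h³ ≥ 1`
  have h4 : 0 < h ^ 3 := by positivity
  by_contra! hc
  nlinarith

lemma quadForm_smul_bounds {d : ℕ} {μ L : ℝ} (hμ : 0 < μ) (hμL : μ ≤ L)
    {H : Matrix (Fin d) (Fin d) ℝ}
    (hHlower : (H - μ • (1 : Matrix (Fin d) (Fin d) ℝ)).PosSemidef)
    (hHupper : (L • (1 : Matrix (Fin d) (Fin d) ℝ) - H).PosSemidef) (v : Fin d → ℝ) :
    μ / L * (v ⬝ᵥ v) ≤ v ⬝ᵥ (((1 / L) • H) *ᵥ v) ∧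
      v ⬝ᵥ (((1 / L) • H) *ᵥ v) ≤ v ⬝ᵥ v := by
  have hL : 0 < L := lt_of_lt_of_le hμ hμL
  have h1 := hHlower.dotProduct_mulVec_nonneg v
  have h2 := hHupper.dotProduct_mulVec_nonneg v
  simp only [star_trivial, sub_mulVec, smul_mulVec, one_mulVec, dotProduct_sub,
    dotProduct_smul, smul_eq_mul] at h1 h2 ⊢
  constructor
  · rw [div_mul_eq_mul_div, one_div_mul_eq_div]
    gcongr; linarith
  · rw [one_div_mul_eq_div, div_le_iff₀ hL]
    linarith

/-- Deterministic contraction estimate of Lemma D.4 (`lem:ACSAGA`):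
for `H` symmetric with `μ I ⪯ H ⪯ L I`, `γ = 1/L`, `κ = L/μ`, and
`0 < h < 1/1648`, the vectors
`A = ((1−h−e^{−2h}) I − ((1−e^{−2h})/2) γ H) a + (h+e^{−2h}) b` and
`C = (1−h) a + h b` satisfy `‖A‖² + ‖C‖² ≤ (1 − h/κ + 200 h²)(‖a‖² + ‖b‖²)`. -/
theorem underdamped_contraction_AC (d : ℕ) (μ L κ γ h : ℝ)
    (hμ : 0 < μ) (hμL : μ ≤ L) (hκ : κ = L / μ) (hγ : γ = 1 / L)
    (hh0 : 0 < h) (hh : h < 1 / 1648)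
    (H : Matrix (Fin d) (Fin d) ℝ) (hHsymm : H.IsSymm)
    (hHlower : (H - μ • (1 : Matrix (Fin d) (Fin d) ℝ)).PosSemidef)
    (hHupper : (L • (1 : Matrix (Fin d) (Fin d) ℝ) - H).PosSemidef)
    (a b : Fin d → ℝ) :
    (∑ i, ((1 - h - Real.exp (-2 * h)) * a i
          - ((1 - Real.exp (-2 * h)) / 2) * γ * H.mulVec a i
          + (h + Real.exp (-2 * h)) * b i) ^ 2)
      + (∑ i, ((1 - h) * a i + h * b i) ^ 2)
      ≤ (1 - h / κ + 200 * h ^ 2) * ((∑ i, (a i) ^ 2) + ∑ i, (b i) ^ 2) := by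
  have hL : 0 < L := lt_of_lt_of_le hμ hμL
  have hm : h / κ = h * (μ / L) := by rw [hκ]; field_simp
  have hm0 : 0 < μ / L := by positivity
  set e := Real.exp (-2 * h) with he
  have he1 : 1 - 2 * h ≤ e := by
    have := Real.add_one_le_exp (-2 * h); linarith
  have he2 : e ≤ 1 - 2 * h + 4 * h ^ 2 := exp_neg_two_mul_le h hh0
  have hq := quadForm_smul_bounds hμ hμL hHlower hHupper
  set G : Matrix (Fin d) (Fin d) ℝ := (1 / L) • H with hG
  have hGs : ∀ v w : Fin d → ℝ, v ⬝ᵥ (G *ᵥ w) = w ⬝ᵥ (G *ᵥ v) := by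
    intro v w
    have hGT : Gᵀ = G := by rw [hG, transpose_smul, hHsymm.eq]
    rw [dotProduct_mulVec, ← mulVec_transpose, hGT, dotProduct_comm]
  have hnn : ∀ v : Fin d → ℝ, 0 ≤ v ⬝ᵥ v := fun v => by
    simpa using dotProduct_star_self_nonneg v
  have hpos : ∀ v : Fin d → ℝ, 0 ≤ v ⬝ᵥ (G *ᵥ v) := fun v =>
    (mul_nonneg hm0.le (hnn v)).trans (hq v).1
  -- `G - G² = (1 - G) G (1 - G) + G (1 - G) G ⪰ 0`, evaluated at `a`
  have hws : (G *ᵥ a) ⬝ᵥ (G *ᵥ a) ≤ a ⬝ᵥ (G *ᵥ a) := by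
    have h1 := hpos (a - G *ᵥ a)
    have h2 := (hq (G *ᵥ a)).2
    have h3 := hGs a (G *ᵥ a)
    simp only [mulVec_sub, sub_dotProduct, dotProduct_sub] at h1
    linarith
  have key := scalar_estimate h e (μ / L) (a ⬝ᵥ a) (b ⬝ᵥ b) (a ⬝ᵥ b) (a ⬝ᵥ (G *ᵥ a))
    (b ⬝ᵥ (G *ᵥ a)) (b ⬝ᵥ (G *ᵥ b)) ((G *ᵥ a) ⬝ᵥ (G *ᵥ a)) hh0 hh he1 he2 (hnn a) (hnn b)
    (by
      have := hnn (a - b)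
      simp only [sub_dotProduct, dotProduct_sub, dotProduct_comm b a] at this
      linarith)
    (by
      have := hnn (a + b)
      simp only [add_dotProduct, dotProduct_add, dotProduct_comm b a] at this
      linarith)
    (hq a).1 (hpos a) (hq a).2 (hq b).1 (hq b).2 hws
    (by
      have := hpos (a - b)
      simp only [mulVec_sub, sub_dotProduct, dotProduct_sub, hGs a b] at this
      linarith)
    (by
      have := (hq (a - b)).2
      simp only [mulVec_sub, sub_dotProduct, dotProduct_sub, hGs a b, dotProduct_comm b a] at this
      linarith)
  have hGa : ∀ i, (G *ᵥ a) i = γ * (H *ᵥ a) i := by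
    intro i; rw [hG, smul_mulVec, hγ]; rfl
  rw [hm]
  refine le_trans (le_of_eq ?_) (key.trans (le_of_eq ?_))
  · simp only [dotProduct, Finset.mul_sum, ← Finset.sum_add_distrib, ← Finset.sum_sub_distrib]
    refine Finset.sum_congr rfl fun i _ => ?_
    rw [hGa i]
    ring
  · simp only [dotProduct, pow_two]
end

section
/- Let 0 < μ ≤ L, set κ = L/μ, and let 0 < h ≤ 1/4. Let H be a symmetric d×d real matrix with μ I_d ⪯ H ⪯ L I_d. Then the symmetric 2d×2d block matrix M = [[(1−2h) I_d, 2h I_d − (h/L) H], [2h I_d − (h/L) H, (1−2h) I_d]] has operator norm at most 1 − h/κ; equivalently, |⟨(a,b), M(a,b)⟩| ≤ (1 − h/κ)(‖a‖² + ‖b‖²) for all a, b ∈ ℝ^d. -/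
/-!
Write `B = 2h I − (h/L) H`, so that `h I ⪯ B ⪯ (2h − h/κ) I`. The block matrix with diagonal blocks
`(1−2h) I` and off-diagonal blocks `B` is block-diagonalised by `u = a + b`, `v = a − b`: twice its
quadratic form is `(1−2h)(‖u‖² + ‖v‖²) + ⟨u, B u⟩ − ⟨v, B v⟩`, while
`2(‖a‖² + ‖b‖²) = ‖u‖² + ‖v‖²`. The bounds on `B` then give both inequalities, the upper one being
governed by `(1−2h) + (2h − h/κ) = 1 − h/κ` and the lower one using `4h ≤ 2`.
-/

open scoped BigOperators Matrix
open Matrix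

/-- The Loewner bounds `μ I ⪯ H ⪯ L I` as bounds on the quadratic form of `(h/L) H`. -/
lemma scaled_quadForm_bounds {d : ℕ} {μ L h : ℝ} (hL : 0 < L) (hh0 : 0 < h)
    {H : Matrix (Fin d) (Fin d) ℝ}
    (hHlower : (H - μ • (1 : Matrix (Fin d) (Fin d) ℝ)).PosSemidef)
    (hHupper : (L • (1 : Matrix (Fin d) (Fin d) ℝ) - H).PosSemidef) (u : Fin d → ℝ) :
    h * μ / L * (u ⬝ᵥ u) ≤ h / L * (u ⬝ᵥ H *ᵥ u) ∧
      h / L * (u ⬝ᵥ H *ᵥ u) ≤ h * (u ⬝ᵥ u) := by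
  have h1 := hHlower.dotProduct_mulVec_nonneg u
  have h2 := hHupper.dotProduct_mulVec_nonneg u
  simp only [star_trivial, sub_mulVec, smul_mulVec, one_mulVec, dotProduct_sub, dotProduct_smul,
    smul_eq_mul] at h1 h2
  have hc : 0 ≤ h / L := by positivity
  constructor
  · calc h * μ / L * (u ⬝ᵥ u) = h / L * (μ * (u ⬝ᵥ u)) := by ring
      _ ≤ _ := mul_le_mul_of_nonneg_left (by linarith) hc
  · calc h / L * (u ⬝ᵥ H *ᵥ u) ≤ h / L * (L * (u ⬝ᵥ u)) :=
          mul_le_mul_of_nonneg_left (by linarith) hc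
      _ = _ := by field_simp

/-- Spectral bound on the dominating block matrix in Lemma D.4: for `H`
symmetric with `μ I ⪯ H ⪯ L I`, `0 < h ≤ 1/4`, the block matrix
`M = [[(1−2h)I, 2hI − (h/L)H], [2hI − (h/L)H, (1−2h)I]]` satisfies
`|⟨(a,b), M(a,b)⟩| ≤ (1 − h/κ)(‖a‖² + ‖b‖²)` for all `a, b`, i.e. its
operator norm is at most `1 − h/κ` where `κ = L/μ`. -/
theorem underdamped_block_matrix_norm_bound (d : ℕ) (μ L κ h : ℝ)
    (hμ : 0 < μ) (hμL : μ ≤ L) (hκ : κ = L / μ)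
    (hh0 : 0 < h) (hh : h ≤ 1 / 4)
    (H : Matrix (Fin d) (Fin d) ℝ) (hHsymm : H.IsSymm)
    (hHlower : (H - μ • (1 : Matrix (Fin d) (Fin d) ℝ)).PosSemidef)
    (hHupper : (L • (1 : Matrix (Fin d) (Fin d) ℝ) - H).PosSemidef)
    (a b : Fin d → ℝ) :
    abs (Sum.elim a b ⬝ᵥ
        (Matrix.fromBlocks
          ((1 - 2 * h) • (1 : Matrix (Fin d) (Fin d) ℝ))
          ((2 * h) • (1 : Matrix (Fin d) (Fin d) ℝ) - (h / L) • H)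
          ((2 * h) • (1 : Matrix (Fin d) (Fin d) ℝ) - (h / L) • H)
          ((1 - 2 * h) • (1 : Matrix (Fin d) (Fin d) ℝ))).mulVec (Sum.elim a b))
      ≤ (1 - h / κ) * ((∑ i, (a i) ^ 2) + ∑ i, (b i) ^ 2) := by
  have hL : 0 < L := hμ.trans_le hμL
  have hr : h / κ = h * μ / L := by rw [hκ]; field_simp
  have hr0 : 0 < h * μ / L := by positivity
  have hr1 : h * μ / L ≤ h := by
    rw [div_le_iff₀ hL]; exact mul_le_mul_of_nonneg_left hμL hh0.le
  have hsymm : b ⬝ᵥ H *ᵥ a = a ⬝ᵥ H *ᵥ b := by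
    rw [dotProduct_mulVec, ← mulVec_transpose, hHsymm.eq, dotProduct_comm]
  have hsq (x : Fin d → ℝ) : ∑ i, x i ^ 2 = x ⬝ᵥ x := by simp [dotProduct, sq]
  obtain ⟨hu1, hu2⟩ := scaled_quadForm_bounds hL hh0 hHlower hHupper (a + b)
  obtain ⟨hv1, hv2⟩ := scaled_quadForm_bounds hL hh0 hHlower hHupper (a - b)
  have hU : 0 ≤ (a + b) ⬝ᵥ (a + b) := by rw [← hsq]; positivity
  have hV : 0 ≤ (a - b) ⬝ᵥ (a - b) := by rw [← hsq]; positivity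
  rw [hr, hsq, hsq]
  have hN : a ⬝ᵥ a + b ⬝ᵥ b = ((a + b) ⬝ᵥ (a + b) + (a - b) ⬝ᵥ (a - b)) / 2 := by
    simp only [add_dotProduct, dotProduct_add, sub_dotProduct, dotProduct_sub]; ring
  have hcross : h / L * (a ⬝ᵥ H *ᵥ b) =
      (h / L * ((a + b) ⬝ᵥ H *ᵥ (a + b)) - h / L * ((a - b) ⬝ᵥ H *ᵥ (a - b))) / 4 := by
    simp only [mulVec_add, mulVec_sub, add_dotProduct, dotProduct_add, sub_dotProduct,
      dotProduct_sub, hsymm]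
    ring
  have hab : a ⬝ᵥ b = ((a + b) ⬝ᵥ (a + b) - (a - b) ⬝ᵥ (a - b)) / 4 := by
    simp only [add_dotProduct, dotProduct_add, sub_dotProduct, dotProduct_sub,
      dotProduct_comm b a]
    ring
  have hform : Sum.elim a b ⬝ᵥ
        (Matrix.fromBlocks
          ((1 - 2 * h) • (1 : Matrix (Fin d) (Fin d) ℝ))
          ((2 * h) • (1 : Matrix (Fin d) (Fin d) ℝ) - (h / L) • H)
          ((2 * h) • (1 : Matrix (Fin d) (Fin d) ℝ) - (h / L) • H)
          ((1 - 2 * h) • (1 : Matrix (Fin d) (Fin d) ℝ))).mulVec (Sum.elim a b)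
      = (1 - 2 * h) * (a ⬝ᵥ a + b ⬝ᵥ b) + 4 * h * (a ⬝ᵥ b) - 2 * (h / L * (a ⬝ᵥ H *ᵥ b)) := by
    simp only [fromBlocks_mulVec, Sum.elim_comp_inl, Sum.elim_comp_inr,
      sumElim_dotProduct_sumElim, sub_mulVec, smul_mulVec, one_mulVec, dotProduct_add,
      dotProduct_sub, dotProduct_smul, smul_eq_mul, hsymm, dotProduct_comm b a]
    ring
  rw [hform, hcross, hN, hab]
  generalize (a + b) ⬝ᵥ (a + b) = U at *
  generalize (a - b) ⬝ᵥ (a - b) = V at *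
  generalize h / L * ((a + b) ⬝ᵥ H *ᵥ (a + b)) = p at *
  generalize h / L * ((a - b) ⬝ᵥ H *ᵥ (a - b)) = q at *
  generalize h * μ / L = r at *
  have hrV : r * V ≤ h * V := mul_le_mul_of_nonneg_right hr1 hV
  have hrU : r * U ≤ h * U := mul_le_mul_of_nonneg_right hr1 hU
  have hhU : h * U ≤ 1 / 4 * U := mul_le_mul_of_nonneg_right hh hU
  have hhV : h * V ≤ 1 / 4 * V := mul_le_mul_of_nonneg_right hh hV
  have hhU0 : 0 ≤ h * U := by positivity
  have hhV0 : 0 ≤ h * V := by positivity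
  rw [abs_le]
  constructor <;> linarith
end
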